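/- arXiv:math/0603539 — 2 statements merged into one kernel-verified Lean document; each statement's English description precedes it below -/
import Mathlib

section
/- Let (X,d) be a geodesic metric space with property (◇) for a constant λ ≥ 1. Then for any points x, y, y' ∈ X and any constant-speed geodesics c, c' : [0,1] → X with c(0) = x = c'(0), c(1) = y and c'(1) = y', one has d(c(t), c'(t)) ≤ 4λ·d(y, y') for all t ∈ [0,1]. -/
/-!
Let `ℓ = d(x, y) ≥ d(x, y')`, `D = d(y, y')` and `t < 1`. Both `c t` and `c' t` lie in
`B(x, tℓ) ∩ B(y, (1 - t)ℓ + D)`, so by (◇) they are at distance at most `2λν`, where `B(z, ν)` is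
some ball in this intersection. A geodesic from `z` towards `y` stays in `B(z, ν) ⊆ B(x, tℓ)` for
distance `ν`, while `B(x, tℓ)` keeps distance at least `(1 - t)ℓ` from `y`; as
`d(z, y) ≤ (1 - t)ℓ + D`, this gives `ν ≤ D`, hence the bound `2λD`.
-/

/-- A constant-speed geodesic from `x` to `y`, parameterized on `[0,1]`. -/
def IsGeodesicSegment {X : Type*} [MetricSpace X] (c : ℝ → X) (x y : X) : Prop :=
  c 0 = x ∧ c 1 = y ∧
    ∀ s ∈ Set.Icc (0:ℝ) 1, ∀ t ∈ Set.Icc (0:ℝ) 1,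
      dist (c s) (c t) = dist x y * |s - t|

/-- A metric space is geodesic if any two points are joined by a constant-speed geodesic. -/
def IsGeodesicSpace (X : Type*) [MetricSpace X] : Prop :=
  ∀ x y : X, ∃ c : ℝ → X, IsGeodesicSegment c x y
/-- Property (◇) with constant `lam`: for any two closed balls with non-empty intersection
there are `z, z'` and `ν ≥ 0` with `B(z,ν) ⊆ B₁ ∩ B₂ ⊆ B(z', lam * ν)`. -/
def HasDiamondProperty (X : Type*) [MetricSpace X] (lam : ℝ) : Prop :=
  ∀ (x₁ x₂ : X) (r₁ r₂ : ℝ),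
    (Metric.closedBall x₁ r₁ ∩ Metric.closedBall x₂ r₂).Nonempty →
    ∃ (z z' : X) (ν : ℝ), 0 ≤ ν ∧
      Metric.closedBall z ν ⊆ Metric.closedBall x₁ r₁ ∩ Metric.closedBall x₂ r₂ ∧
      Metric.closedBall x₁ r₁ ∩ Metric.closedBall x₂ r₂ ⊆ Metric.closedBall z' (lam * ν)

section

variable {X : Type*} [MetricSpace X]

open Metric

namespace IsGeodesicSegment

variable {c : ℝ → X} {x y : X} {t : ℝ}

lemma dist_left (hc : IsGeodesicSegment c x y) (ht : t ∈ Set.Icc (0 : ℝ) 1) :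
    dist (c t) x = t * dist x y := by
  have h := hc.2.2 t ht 0 (by simp)
  rwa [hc.1, sub_zero, abs_of_nonneg ht.1, mul_comm] at h

lemma dist_right (hc : IsGeodesicSegment c x y) (ht : t ∈ Set.Icc (0 : ℝ) 1) :
    dist (c t) y = (1 - t) * dist x y := by
  have h := hc.2.2 t ht 1 (by simp)
  rwa [hc.2.1, abs_sub_comm, abs_of_nonneg (sub_nonneg.2 ht.2), mul_comm] at h

lemma mem_closedBall_inter_closedBall (hc : IsGeodesicSegment c x y)
    (ht : t ∈ Set.Icc (0 : ℝ) 1) {w : X} {l D : ℝ} (hl : dist x y ≤ l) (hD : dist y w ≤ D) :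
    c t ∈ closedBall x (t * l) ∩ closedBall w ((1 - t) * l + D) := by
  constructor
  · calc dist (c t) x = t * dist x y := hc.dist_left ht
      _ ≤ t * l := mul_le_mul_of_nonneg_left hl ht.1
  · calc dist (c t) w ≤ dist (c t) y + dist y w := dist_triangle ..
      _ = (1 - t) * dist x y + dist y w := by rw [hc.dist_right ht]
      _ ≤ (1 - t) * l + D := by
        gcongr
        exact sub_nonneg.2 ht.2

end IsGeodesicSegment

namespace IsGeodesicSpace

lemma exists_dist_eq_and_dist_eq_sub (hX : IsGeodesicSpace X) {z y : X} {ν : ℝ} (hν : 0 ≤ ν)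
    (h : ν ≤ dist z y) : ∃ w, dist w z = ν ∧ dist w y = dist z y - ν := by
  obtain ⟨g, hg⟩ := hX z y
  have ht : ν / dist z y ∈ Set.Icc (0 : ℝ) 1 :=
    ⟨div_nonneg hν dist_nonneg, div_le_one_of_le₀ h dist_nonneg⟩
  have hmul : ν / dist z y * dist z y = ν :=
    div_mul_cancel_of_imp fun h0 => le_antisymm (h.trans_eq h0) hν
  refine ⟨g (ν / dist z y), ?_, ?_⟩
  · rw [hg.dist_left ht, hmul]
  · rw [hg.dist_right ht, sub_mul, one_mul, hmul]

lemma dist_add_le_of_closedBall_subset (hX : IsGeodesicSpace X) {x y z : X} {r ν : ℝ}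
    (hν : 0 ≤ ν) (hsub : closedBall z ν ⊆ closedBall x r) (hr : r < dist x y) :
    dist x y + ν ≤ r + dist z y := by
  have hνy : ν ≤ dist z y := by
    by_contra! hlt
    have hy : dist y x ≤ r := hsub (mem_closedBall'.2 hlt.le)
    exact hr.not_ge (dist_comm y x ▸ hy)
  obtain ⟨w, hwz, hwy⟩ := hX.exists_dist_eq_and_dist_eq_sub hν hνy
  have hwx : dist w x ≤ r := hsub hwz.le
  linarith [dist_triangle_left x y w]

end IsGeodesicSpace

namespace HasDiamondProperty

variable {lam : ℝ}

lemma exists_closedBall_subset_and_dist_le (hdia : HasDiamondProperty X lam) {x y : X} {r s : ℝ}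
    (hne : (closedBall x r ∩ closedBall y s).Nonempty) :
    ∃ (z : X) (ν : ℝ), 0 ≤ ν ∧ closedBall z ν ⊆ closedBall x r ∩ closedBall y s ∧
      ∀ p ∈ closedBall x r ∩ closedBall y s, ∀ q ∈ closedBall x r ∩ closedBall y s,
        dist p q ≤ 2 * lam * ν := by
  obtain ⟨z, z', ν, hν, hin, hout⟩ := hdia x y r s hne
  refine ⟨z, ν, hν, hin, fun p hp q hq => ?_⟩
  calc dist p q ≤ dist p z' + dist q z' := dist_triangle_right ..
    _ ≤ lam * ν + lam * ν := add_le_add (hout hp) (hout hq)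
    _ = 2 * lam * ν := by ring

-- If `B(z, ν)` lies in a ball `B(a, r)` missing some point `b`, a geodesic from `z` towards `b`
-- has a point at distance exactly `ν` from `z`, so (◇) for `B(a, r)` gives `ν ≤ 2λν`.
lemma one_half_le [Nontrivial X] (hdia : HasDiamondProperty X lam) (hX : IsGeodesicSpace X) :
    1 / 2 ≤ lam := by
  obtain ⟨a, b, hab⟩ := exists_pair_ne X
  obtain ⟨r, hr, hrb⟩ := exists_between (dist_pos.2 hab)
  have ha : a ∈ closedBall a r := mem_closedBall_self hr.le
  obtain ⟨z, ν, hν, hin, hdiam⟩ := hdia.exists_closedBall_subset_and_dist_le ⟨a, ha, ha⟩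
  rw [Set.inter_self] at hin hdiam
  have hνpos : 0 < ν := by
    obtain ⟨m, hma, -⟩ := hX.exists_dist_eq_and_dist_eq_sub hr.le hrb.le
    refine hν.lt_of_ne' fun hν0 => hr.not_ge ?_
    simpa [hma, hν0] using hdiam m hma.le a ha
  have hνb : ν ≤ dist z b := by
    linarith [hX.dist_add_le_of_closedBall_subset hν hin hrb]
  obtain ⟨w, hwz, -⟩ := hX.exists_dist_eq_and_dist_eq_sub hν hνb
  have hνle : 1 * ν ≤ 2 * lam * ν := by
    simpa [hwz] using hdiam w (hin hwz.le) z (hin (mem_closedBall_self hν))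
  linarith [le_of_mul_le_mul_right hνle hνpos]

lemma dist_le_of_mem_closedBall_inter (hdia : HasDiamondProperty X lam) (hX : IsGeodesicSpace X)
    (hlam : 0 ≤ lam) {x y p q : X} {r s : ℝ} (hr : r < dist x y)
    (hp : p ∈ closedBall x r ∩ closedBall y s) (hq : q ∈ closedBall x r ∩ closedBall y s) :
    dist p q ≤ 2 * lam * (r + s - dist x y) := by
  obtain ⟨z, ν, hν, hin, hdiam⟩ := hdia.exists_closedBall_subset_and_dist_le ⟨p, hp⟩
  have hzy : dist z y ≤ s := (hin (mem_closedBall_self hν)).2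
  have hνle : ν ≤ r + s - dist x y := by
    linarith [hX.dist_add_le_of_closedBall_subset hν (fun _ hw => (hin hw).1) hr]
  calc dist p q ≤ 2 * lam * ν := hdiam p hp q hq
    _ ≤ 2 * lam * (r + s - dist x y) := by gcongr

end HasDiamondProperty

theorem geodesic_bicombing_of_diamond_general {lam : ℝ} (hgeo : IsGeodesicSpace X)
    (hdia : HasDiamondProperty X lam) {x y y' : X} {c c' : ℝ → X}
    (hc : IsGeodesicSegment c x y) (hc' : IsGeodesicSegment c' x y') {t : ℝ}
    (ht : t ∈ Set.Icc (0 : ℝ) 1) : dist (c t) (c' t) ≤ 2 * lam * dist y y' := by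
  wlog hle : dist x y' ≤ dist x y generalizing y y' c c'
  · rw [dist_comm, dist_comm y]
    exact this hc' hc (le_of_not_ge hle)
  cases subsingleton_or_nontrivial X
  · simp [Subsingleton.elim (c t) (c' t), Subsingleton.elim y y']
  have hlam : 1 / 2 ≤ lam := hdia.one_half_le hgeo
  rcases lt_or_ge (t * dist x y) (dist x y) with hlt | hge
  · have hmem := hc.mem_closedBall_inter_closedBall ht le_rfl
      ((dist_self y).trans_le (dist_nonneg (x := y) (y := y')))
    have hmem' := hc'.mem_closedBall_inter_closedBall ht hle (dist_comm y' y).le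
    calc dist (c t) (c' t)
        ≤ 2 * lam * (t * dist x y + ((1 - t) * dist x y + dist y y') - dist x y) :=
          hdia.dist_le_of_mem_closedBall_inter hgeo (by linarith) hlt hmem hmem'
      _ = 2 * lam * dist y y' := by ring
  · have hend : dist (c t) y ≤ 0 := by linarith [hc.dist_right ht]
    have hend' : dist (c' t) y' ≤ 0 := by
      linarith [hc'.dist_right ht, mul_le_mul_of_nonneg_left hle (sub_nonneg.2 ht.2)]
    rw [dist_le_zero.1 hend, dist_le_zero.1 hend']
    exact le_mul_of_one_le_left dist_nonneg (by linarith)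

end

theorem geodesic_bicombing_of_diamond {X : Type*} [MetricSpace X] (lam : ℝ) (hlam : 1 ≤ lam)
    (hgeo : IsGeodesicSpace X) (hdia : HasDiamondProperty X lam)
    (x y y' : X) (c c' : ℝ → X)
    (hc : IsGeodesicSegment c x y) (hc' : IsGeodesicSegment c' x y') :
    ∀ t ∈ Set.Icc (0:ℝ) 1, dist (c t) (c' t) ≤ 4 * lam * dist y y' := by
  intro t ht
  calc dist (c t) (c' t) ≤ 2 * lam * dist y y' :=
        geodesic_bicombing_of_diamond_general hgeo hdia hc hc' ht
    _ ≤ 4 * lam * dist y y' := by gcongr; norm_num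
end

section
/- Let (X,d) be a metric space, U ⊆ ℝᵏ open, and φ : U → X Lipschitz. Then for almost every z ∈ U the function v ↦ md φ_z(v) is a seminorm on ℝᵏ: it exists for all v ∈ ℝᵏ, is nonnegative, satisfies md φ_z(sv) = |s|·md φ_z(v) for all s ∈ ℝ and v ∈ ℝᵏ, and md φ_z(v + w) ≤ md φ_z(v) + md φ_z(w) for all v, w ∈ ℝᵏ. -/
/-- The metric directional derivative of `φ` at `z` in direction `v` is the limit
`lim_{r → 0⁺} d(φ(z + r v), φ z) / r`; `HasMDDerivAt φ z v L` says it exists and equals `L`. -/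
def HasMDDerivAt {X : Type*} [MetricSpace X] {k : ℕ}
    (φ : EuclideanSpace ℝ (Fin k) → X) (z v : EuclideanSpace ℝ (Fin k)) (L : ℝ) : Prop :=
  Filter.Tendsto (fun r : ℝ => dist (φ (z + r • v)) (φ z) / r)
    (nhdsWithin 0 (Set.Ioi 0)) (nhds L)

/-!
By the Kuratowski embedding and coordinatewise Lipschitz extension, `φ` may be replaced by a
Lipschitz map `G` from the whole space to `ℓ^∞`. By Rademacher's theorem its coordinates are
differentiable almost everywhere, and the metric differential is `p v = sup_i |D G_i(z) v|`.

On a line in direction `v`, each coordinate bounds the metric speed from below, while the integral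
of the supremum of the coordinate speeds bounds the increments of `G` from above, so that Lebesgue's
differentiation theorem identifies the metric speed with that supremum almost everywhere. Fubini
gives the directional statement for a countable dense set of directions `v`. The two-sided limit
along `v` says that the real function `y ↦ ‖G y - G z‖ - p (y - z)` has line derivative `0` at `z`;
this function is Lipschitz, so vanishing line derivatives in a dense set of directions make its
Fréchet derivative vanish.
-/

open MeasureTheory Set Filter Topology Asymptotics
open scoped NNReal ENNReal lp

section CoordSpeed

variable {ι : Type*} {K : ℝ≥0} {H : ℝ → ℓ^∞(ι, ℝ)}

/-- The supremum of the speeds of the coordinates of a curve in `ℓ^∞`. For Lipschitz curves the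
supremum is finite; otherwise it may take the junk value `0`. -/
noncomputable def coordSpeed (H : ℝ → ℓ^∞(ι, ℝ)) (t : ℝ) : ℝ :=
  ⨆ i, |deriv (fun s => H s i) t|

lemma coordSpeed_nonneg (H : ℝ → ℓ^∞(ι, ℝ)) (t : ℝ) : 0 ≤ coordSpeed H t :=
  Real.iSup_nonneg fun _ => abs_nonneg _

lemma coordSpeed_comp_const_add (H : ℝ → ℓ^∞(ι, ℝ)) (a t : ℝ) :
    coordSpeed (fun s => H (a + s)) t = coordSpeed H (a + t) :=
  iSup_congr fun i => congrArg _ (deriv_comp_const_add (fun s => H s i) a t)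

lemma abs_deriv_coord_le (hH : LipschitzWith K H) (i : ι) (t : ℝ) :
    |deriv (fun s => H s i) t| ≤ K :=
  norm_deriv_le_of_lipschitz ((LipschitzWith.coordinate K).1 hH i)

lemma coordSpeed_le (hH : LipschitzWith K H) (t : ℝ) : coordSpeed H t ≤ K :=
  Real.iSup_le (fun i => abs_deriv_coord_le hH i t) K.coe_nonneg

lemma abs_deriv_coord_le_coordSpeed (hH : LipschitzWith K H) (i : ι) (t : ℝ) :
    |deriv (fun s => H s i) t| ≤ coordSpeed H t :=
  le_ciSup (f := fun j => |deriv (fun s => H s j) t|)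
    ⟨K, forall_mem_range.2 fun j => abs_deriv_coord_le hH j t⟩ i

variable [Countable ι]

lemma locallyIntegrable_coordSpeed (hH : LipschitzWith K H) : LocallyIntegrable (coordSpeed H) := by
  have hmeas : Measurable (coordSpeed H) := Measurable.iSup fun i => (measurable_deriv _).abs
  refine (memLp_top_of_bound hmeas.aestronglyMeasurable (K : ℝ) (.of_forall fun t => ?_) :
    MemLp _ ∞ volume).locallyIntegrable le_top
  exact (Real.norm_of_nonneg (coordSpeed_nonneg H t)).trans_le (coordSpeed_le hH t)

lemma norm_sub_le_abs_integral_coordSpeed (hH : LipschitzWith K H) (a b : ℝ) :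
    ‖H b - H a‖ ≤ |∫ t in a..b, coordSpeed H t| := by
  refine lp.norm_le_of_forall_le (abs_nonneg _) fun i => ?_
  have hcoord : AbsolutelyContinuousOnInterval (fun s => H s i) a b :=
    ((LipschitzWith.coordinate K).1 hH i).lipschitzOnWith.absolutelyContinuousOnInterval
  calc ‖(H b - H a : ℓ^∞(ι, ℝ)) i‖ = ‖∫ t in a..b, deriv (fun s => H s i) t‖ := by
        rw [hcoord.integral_deriv_eq_sub]; rfl
    _ ≤ |∫ t in a..b, coordSpeed H t| :=
        intervalIntegral.norm_integral_le_abs_of_norm_le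
          (.of_forall fun t => abs_deriv_coord_le_coordSpeed hH i t)
          (intervalIntegrable_iff.2
            ((locallyIntegrable_coordSpeed hH).integrableOn_isCompact isCompact_uIcc |>.mono_set
              uIoc_subset_uIcc))

lemma ae_tendsto_norm_sub_div_abs (hH : LipschitzWith K H) :
    ∀ᵐ t, Tendsto (fun r => ‖H (t + r) - H t‖ / |r|) (𝓝[≠] 0) (𝓝 (coordSpeed H t)) := by
  have hdiff : ∀ᵐ t, ∀ i, DifferentiableAt ℝ (fun s => H s i) t :=
    ae_all_iff.2 fun i => ((LipschitzWith.coordinate K).1 hH i).ae_differentiableAt_real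
  filter_upwards [hdiff, LocallyIntegrable.ae_hasDerivAt_integral (locallyIntegrable_coordSpeed hH)]
    with t hcoord hintegral
  refine tendsto_order.2 ⟨fun a ha => ?_, fun a ha => ?_⟩
  · cases isEmpty_or_nonempty ι with
    | inl _ =>
      have ha₀ : a < 0 := by simpa only [coordSpeed, Real.iSup_of_isEmpty] using ha
      exact .of_forall fun r => ha₀.trans_le (by positivity)
    | inr _ =>
      obtain ⟨i, hi⟩ := exists_lt_of_lt_ciSup ha
      have hslope := (hasDerivAt_iff_tendsto_slope_zero.1 (hcoord i).hasDerivAt).abs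
      filter_upwards [hslope.eventually_const_lt hi] with r hr
      rw [smul_eq_mul, abs_mul, abs_inv, ← div_eq_inv_mul] at hr
      refine hr.trans_le ?_
      gcongr
      exact lp.norm_apply_le_norm ENNReal.top_ne_zero (H (t + r) - H t) i
  · have hslope := (hasDerivAt_iff_tendsto_slope_zero.1 (hintegral t)).abs
    rw [abs_of_nonneg (coordSpeed_nonneg H t)] at hslope
    filter_upwards [hslope.eventually_lt_const ha] with r hr
    rw [intervalIntegral.integral_same, sub_zero, smul_eq_mul, abs_mul, abs_inv,
      ← div_eq_inv_mul] at hr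
    refine lt_of_le_of_lt ?_ hr
    gcongr
    exact norm_sub_le_abs_integral_coordSpeed hH t (t + r)

end CoordSpeed

lemma hasDerivAt_sub_abs_mul_of_tendsto {q : ℝ → ℝ} {L : ℝ} (hq₀ : q 0 = 0)
    (hq : Tendsto (fun r => q r / |r|) (𝓝[≠] 0) (𝓝 L)) :
    HasDerivAt (fun r => q r - |r| * L) 0 0 := by
  rw [hasDerivAt_iff_tendsto_slope_zero, tendsto_zero_iff_abs_tendsto_zero]
  have habs : Tendsto (fun r => |q r / |r| - L|) (𝓝[≠] 0) (𝓝 0) := by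
    simpa only [sub_self, abs_zero] using (hq.sub_const L).abs
  refine habs.congr' ?_
  filter_upwards [self_mem_nhdsWithin] with r hr
  have hr₀ : |r| ≠ 0 := abs_ne_zero.2 hr
  simp only [Function.comp_apply, zero_add, hq₀, abs_zero, zero_mul, sub_zero, smul_eq_mul,
    abs_mul, abs_inv]
  rw [div_sub' hr₀, abs_div, abs_abs, div_eq_inv_mul]

lemma measurableSet_hasFDerivAt_with_param {𝕜 E F α : Type*} [NontriviallyNormedField 𝕜]
    [NormedAddCommGroup E] [NormedSpace 𝕜 E] [LocallyCompactSpace E] [MeasurableSpace E]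
    [OpensMeasurableSpace E] [NormedAddCommGroup F] [NormedSpace 𝕜 F] [TopologicalSpace α]
    [MeasurableSpace α] [OpensMeasurableSpace α] {f : α → E → F} (hf : Continuous f.uncurry)
    (f' : E →L[𝕜] F) (x : E) : MeasurableSet {a | HasFDerivAt (f a) f' x} := by
  have hset : {a | HasFDerivAt (f a) f' x} = (fun a => (a, x)) ⁻¹'
      {p : α × E | DifferentiableAt 𝕜 (f p.1) p.2 ∧ fderiv 𝕜 (f p.1) p.2 ∈ ({f'} : Set _)} := by
    ext a
    exact ⟨fun h => ⟨h.differentiableAt, h.fderiv⟩, fun h => h.2 ▸ h.1.hasFDerivAt⟩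
  rw [hset]
  exact measurable_prodMk_right (measurableSet_of_differentiableAt_of_isComplete_with_param hf
    isCompact_singleton.isComplete)

lemma lipschitzWith_seminorm_of_le {𝕜 V : Type*} [SeminormedRing 𝕜] [SeminormedAddCommGroup V]
    [Module 𝕜 V] {p : Seminorm 𝕜 V} {C : ℝ≥0} (hp : ∀ v, p v ≤ C * ‖v‖) : LipschitzWith C p :=
  LipschitzWith.of_dist_le_mul fun v w =>
    (p.norm_sub_map_le_sub v w).trans <| (hp _).trans_eq <| by rw [dist_eq_norm]

section MetricDifferential

variable {E : Type*} [NormedAddCommGroup E] [NormedSpace ℝ E] {ι : Type*} {K : ℝ≥0}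
  {G : E → ℓ^∞(ι, ℝ)}

lemma lipschitzWith_comp_line (hG : LipschitzWith K G) (z v : E) :
    LipschitzWith (K * ‖v‖₊) fun t : ℝ => G (z + t • v) :=
  hG.comp <| LipschitzWith.of_dist_le_mul fun s t => by
    rw [dist_add_left, dist_eq_norm, ← sub_smul, norm_smul, dist_eq_norm, mul_comm, coe_nnnorm]

lemma measurable_coordSpeed_line [Countable ι] [MeasurableSpace E] [OpensMeasurableSpace E]
    (hG : Continuous G) (v : E) : Measurable fun z => coordSpeed (fun t => G (z + t • v)) 0 :=
  Measurable.iSup fun i => (measurable_lineDeriv (𝕜 := ℝ) (v := v)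
    ((lp.evalCLM ℝ (fun _ : ι => ℝ) ∞ i).continuous.comp hG)).abs

lemma ae_hasDerivAt_norm_sub_line [Countable ι] [FiniteDimensional ℝ E] [MeasurableSpace E]
    [BorelSpace E] (μ : Measure E) [μ.IsAddHaarMeasure] (hG : LipschitzWith K G) (v : E) :
    ∀ᵐ z ∂μ, HasDerivAt
      (fun r : ℝ => ‖G (z + r • v) - G z‖ - |r| * coordSpeed (fun t => G (z + t • v)) 0) 0 0 := by
  -- The speed is merely measurable in `z`, so it enters `f` as a separate parameter to keep `f`
  -- continuous.
  let f : E × ℝ → ℝ → ℝ := fun p r => ‖G (p.1 + r • v) - G p.1‖ - |r| * p.2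
  have hf : Continuous f.uncurry := by
    have := hG.continuous
    fun_prop
  have hmeas : MeasurableSet {z | HasDerivAt (f (z, coordSpeed (fun t => G (z + t • v)) 0)) 0 0} :=
    (measurable_id.prodMk (measurable_coordSpeed_line hG.continuous v))
      (measurableSet_hasFDerivAt_with_param hf _ 0)
  refine ae_mem_of_ae_add_linearMap_mem (LinearMap.toSpanSingleton ℝ E v) volume μ hmeas
    fun z => ?_
  filter_upwards [ae_tendsto_norm_sub_div_abs (lipschitzWith_comp_line hG z v)] with t ht
  have hspeed : coordSpeed (fun s => G (z + (t • v + s • v))) 0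
      = coordSpeed (fun s => G (z + s • v)) t := by
    simpa only [add_smul, add_zero]
      using coordSpeed_comp_const_add (fun s => G (z + s • v)) t 0
  refine hasDerivAt_sub_abs_mul_of_tendsto (by simp) ?_
  simpa [hspeed, add_smul, add_assoc] using ht

/-- The seminorm `v ↦ sup_i |D G_i(z) v|`, the metric differential of a Lipschitz map `G` into
`ℓ^∞` at almost every `z`. The supremum of an unbounded family of seminorms is `0`. -/
noncomputable def coordSeminorm (G : E → ℓ^∞(ι, ℝ)) (z : E) : Seminorm ℝ E :=
  ⨆ i, (normSeminorm ℝ ℝ).comp (fderiv ℝ (fun x => G x i) z).toLinearMap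

lemma abs_fderiv_coord_le (hG : LipschitzWith K G) (i : ι) (z v : E) :
    |fderiv ℝ (fun x => G x i) z v| ≤ K * ‖v‖ :=
  (fderiv ℝ (fun x => G x i) z).le_of_opNorm_le
    (norm_fderiv_le_of_lipschitz ℝ ((LipschitzWith.coordinate K).1 hG i)) v

lemma coordSeminorm_apply (hG : LipschitzWith K G) (z v : E) :
    coordSeminorm G z v = ⨆ i, |fderiv ℝ (fun x => G x i) z v| :=
  Seminorm.iSup_apply <| Seminorm.bddAbove_range_iff.2 fun w =>
    ⟨K * ‖w‖, forall_mem_range.2 fun i => abs_fderiv_coord_le hG i z w⟩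

lemma coordSeminorm_le (hG : LipschitzWith K G) (z v : E) : coordSeminorm G z v ≤ K * ‖v‖ := by
  rw [coordSeminorm_apply hG]
  exact Real.iSup_le (fun i => abs_fderiv_coord_le hG i z v) (by positivity)

lemma coordSpeed_line_eq_coordSeminorm (hG : LipschitzWith K G) {z : E}
    (hz : ∀ i, DifferentiableAt ℝ (fun x => G x i) z) (v : E) :
    coordSpeed (fun t : ℝ => G (z + t • v)) 0 = coordSeminorm G z v :=
  (iSup_congr fun i => congrArg _ (hz i).lineDeriv_eq_fderiv).trans
    (coordSeminorm_apply hG z v).symm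

/-- Kirchheim's metric differentiability: `p` is the metric differential of `φ` at `z` if
`d(φ y, φ z) = p (y - z) + o(‖y - z‖)` as `y → z` within `s`. -/
def HasMetricFDerivWithinAt {X : Type*} [PseudoMetricSpace X] (φ : E → X) (p : Seminorm ℝ E)
    (s : Set E) (z : E) : Prop :=
  (fun y => dist (φ y) (φ z) - p (y - z)) =o[𝓝[s] z] fun y => y - z

lemma HasMetricFDerivWithinAt.tendsto_dist_div {X : Type*} [PseudoMetricSpace X] {φ : E → X}
    {p : Seminorm ℝ E} {s : Set E} {z : E} (h : HasMetricFDerivWithinAt φ p s z) (hs : s ∈ 𝓝 z)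
    (v : E) : Tendsto (fun r : ℝ => dist (φ (z + r • v)) (φ z) / r) (𝓝[>] 0) (𝓝 (p v)) := by
  have hline : Tendsto (fun r : ℝ => z + r • v) (𝓝[>] 0) (𝓝 z) := by
    have hcont : Continuous fun r : ℝ => z + r • v := by fun_prop
    simpa using (hcont.tendsto 0).mono_left nhdsWithin_le_nhds
  rw [HasMetricFDerivWithinAt, nhdsWithin_eq_nhds.2 hs] at h
  have hsmall : (fun r : ℝ => dist (φ (z + r • v)) (φ z) - p (r • v)) =o[𝓝[>] 0] fun r => r := by
    have hcomp := h.comp_tendsto hline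
    simp only [Function.comp_def, add_sub_cancel_left] at hcomp
    exact hcomp.trans_isBigO (.of_bound ‖v‖ (.of_forall fun r => by rw [norm_smul, mul_comm]))
  have hlim := hsmall.tendsto_div_nhds_zero.add_const (p v)
  rw [zero_add] at hlim
  refine hlim.congr' ?_
  filter_upwards [self_mem_nhdsWithin] with r (hr : 0 < r)
  rw [map_smul_eq_mul, Real.norm_of_nonneg hr.le]
  field_simp
  ring

lemma hasMetricFDerivWithinAt_univ_of_dense {X : Type*} [PseudoMetricSpace X]
    [FiniteDimensional ℝ E] {φ : E → X} (hφ : LipschitzWith K φ) {p : Seminorm ℝ E}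
    {C : ℝ≥0} (hp : LipschitzWith C p) {s : Set E} (hs : Dense s) {z : E}
    (h : ∀ v ∈ s, HasDerivAt (fun r : ℝ => dist (φ (z + r • v)) (φ z) - |r| * p v) 0 0) :
    HasMetricFDerivWithinAt φ p univ z := by
  have hlip : LipschitzWith _ fun y => dist (φ y) (φ z) - p (y - z) :=
    (LipschitzWith.dist_left (φ z) |>.comp hφ).sub (hp.comp (LipschitzWith.id.sub (.const z)))
  have hfderiv : HasFDerivAt (fun y => dist (φ y) (φ z) - p (y - z)) (0 : E →L[ℝ] ℝ) z :=
    hlip.hasFDerivAt_of_hasLineDerivAt_of_closure (fun v _ => hs v) fun v hv => by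
      simpa [HasLineDerivAt, map_smul_eq_mul] using h v hv
  simpa [HasMetricFDerivWithinAt, hasFDerivAt_iff_isLittleO] using hfderiv

lemma ae_hasMetricFDerivWithinAt_coordSeminorm [Countable ι] [FiniteDimensional ℝ E]
    [MeasurableSpace E] [BorelSpace E] (μ : Measure E) [μ.IsAddHaarMeasure]
    (hG : LipschitzWith K G) :
    ∀ᵐ z ∂μ, HasMetricFDerivWithinAt G (coordSeminorm G z) univ z := by
  obtain ⟨S, hS, hdense⟩ := TopologicalSpace.exists_countable_dense E
  have hline := (ae_ball_iff hS).2 fun v _ => ae_hasDerivAt_norm_sub_line μ hG v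
  have hdiff : ∀ᵐ z ∂μ, ∀ i, DifferentiableAt ℝ (fun x => G x i) z :=
    ae_all_iff.2 fun i => ((LipschitzWith.coordinate K).1 hG i).ae_differentiableAt
  filter_upwards [hline, hdiff] with z hlinez hdiffz
  refine hasMetricFDerivWithinAt_univ_of_dense hG
    (lipschitzWith_seminorm_of_le (coordSeminorm_le hG z)) hdense fun v hv => ?_
  simpa only [dist_eq_norm, coordSpeed_line_eq_coordSeminorm hG hdiffz] using hlinez v hv

end MetricDifferential

lemma exists_lipschitzWith_dist_eq_of_lipschitzOnWith {α X : Type*} [PseudoMetricSpace α]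
    [SecondCountableTopology α] [PseudoMetricSpace X] {s : Set α} {φ : α → X} {K : ℝ≥0}
    (hφ : LipschitzOnWith K φ s) :
    ∃ G : α → ℓ^∞(ℕ, ℝ), LipschitzWith K G ∧
      ∀ x ∈ s, ∀ y ∈ s, dist (G x) (G y) = dist (φ x) (φ y) := by
  let ψ : s → SeparationQuotient X := fun x => SeparationQuotient.mk (φ x)
  have hψ : Continuous ψ :=
    SeparationQuotient.continuous_mk.comp hφ.continuousOn.domRestrict
  have : TopologicalSpace.SeparableSpace (range ψ) :=
    (TopologicalSpace.isSeparable_range hψ).separableSpace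
  let e : s → ℓ^∞(ℕ, ℝ) := kuratowskiEmbedding (range ψ) ∘ rangeFactorization ψ
  have he (x y : s) : dist (e x) (e y) = dist (φ x) (φ y) :=
    (kuratowskiEmbedding.isometry (range ψ)).dist_eq _ _
  let F : α → ℓ^∞(ℕ, ℝ) := Function.extend (↑) e 0
  have hF : ∀ x ∈ s, ∀ y ∈ s, dist (F x) (F y) = dist (φ x) (φ y) := fun x hx y hy => by
    have hFe (a : s) : F a = e a := Subtype.val_injective.extend_apply e 0 a
    rw [hFe ⟨x, hx⟩, hFe ⟨y, hy⟩, he]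
  have hFlip : LipschitzOnWith K F s := LipschitzOnWith.of_dist_le_mul fun x hx y hy =>
    (hF x hx y hy).trans_le (hφ.dist_le_mul x hx y hy)
  obtain ⟨G, hG, hFG⟩ := hFlip.extend_lp_infty
  exact ⟨G, hG, fun x hx y hy => by rw [← hFG hx, ← hFG hy, hF x hx y hy]⟩

theorem md_is_seminorm_ae_general {E X : Type*} [NormedAddCommGroup E] [NormedSpace ℝ E]
    [FiniteDimensional ℝ E] [MeasurableSpace E] [BorelSpace E] (μ : Measure E)
    [μ.IsAddHaarMeasure] [PseudoMetricSpace X] {s : Set E} {φ : E → X} {K : ℝ≥0}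
    (hφ : LipschitzOnWith K φ s) :
    ∀ᵐ z ∂μ, z ∈ s → ∃ p : Seminorm ℝ E, HasMetricFDerivWithinAt φ p s z := by
  obtain ⟨G, hG, hdist⟩ := exists_lipschitzWith_dist_eq_of_lipschitzOnWith hφ
  filter_upwards [ae_hasMetricFDerivWithinAt_coordSeminorm μ hG] with z hGz hz
  refine ⟨coordSeminorm G z, (hGz.mono (nhdsWithin_mono z (subset_univ s))).congr' ?_ .rfl⟩
  filter_upwards [self_mem_nhdsWithin] with y hy
  rw [hdist y hy z hz]

theorem md_is_seminorm_ae {X : Type*} [MetricSpace X] (k : ℕ)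
    (U : Set (EuclideanSpace ℝ (Fin k))) (hU : IsOpen U)
    (φ : EuclideanSpace ℝ (Fin k) → X) (K : NNReal) (hφ : LipschitzOnWith K φ U) :
    ∀ᵐ z ∂(MeasureTheory.volume.restrict U),
      ∃ N : EuclideanSpace ℝ (Fin k) → ℝ,
        (∀ v, HasMDDerivAt φ z v (N v)) ∧
        (∀ v, 0 ≤ N v) ∧
        (∀ (s : ℝ) (v), N (s • v) = |s| * N v) ∧
        (∀ v w, N (v + w) ≤ N v + N w) := by
  filter_upwards [ae_restrict_of_ae (md_is_seminorm_ae_general volume hφ),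
    ae_restrict_mem hU.measurableSet] with z hz hzU
  obtain ⟨p, hp⟩ := hz hzU
  exact ⟨p, hp.tendsto_dist_div (hU.mem_nhds hzU), apply_nonneg p, map_smul_eq_mul p,
    map_add_le_add p⟩
end
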